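/- Let m be an odd prime and let h be an integer with 3 ≤ h ≤ m−1 such that either (I) m ≥ 5 and 2h ≡ 3 (mod m), or (II) m ≡ 2 (mod 3) and h = (m+1)/3. Set e = 3^h + 13. Then the equation (x+1)^e − x^e − 1 = 0 has the unique solution x = 0 in the finite field F_{3^m}; that is, for every x in F_{3^m}, (x+1)^e − x^e − 1 = 0 if and only if x = 0. -/

import Mathlib

/-!
Let `e = 3 ^ h + 13`, which is even, and let `σ t = t ^ 3 ^ h`. The Cayley substitution
`y = (x + 1) / (x - 1)` turns `(x + 1) ^ e = x ^ e + 1` into the symmetric equation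
`y ^ e = (y + 1) ^ e + (y - 1) ^ e`, where `x = 0` corresponds to `y = -1`. The difference of its
two sides factors. One factor is an Artin–Schreier polynomial in `y ^ 2`, without zeros when
`3 ∤ m`; the other expresses `y * σ y` as a cubic polynomial in `k = 1 / (y ^ 2 + 1)`. Hence `σ`
acts on `k` by a rational map of degree 7. The congruence on `h` says `σ (σ y) = y ^ 27` or
`σ (σ (σ y)) = y ^ 3`, so eliminating the conjugates of `y` leaves a polynomial equation for `k`.
Apart from `k + 1` and another Artin–Schreier factor, the eliminant is a sum of two coprime squares,
and these have no zeros because `-1` is not a square when `m` is odd. So `k = -1`, that is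
`y ^ 2 = 1`, and `x = 0`.
-/

section FrobeniusPeriod

variable {M : Type*} [Monoid M] {p m n : ℕ} {t : M}

theorem isPeriodicPt_pow_iff : Function.IsPeriodicPt (· ^ p) m t ↔ t ^ p ^ m = t := by
  rw [Function.IsPeriodicPt, Function.IsFixedPt, pow_iterate]

theorem pow_eq_self_of_coprime (h : m.Coprime n) (hm : t ^ p ^ m = t) (hn : t ^ p ^ n = t) :
    t ^ p = t := by
  have hper := (isPeriodicPt_pow_iff.2 hm).gcd (isPeriodicPt_pow_iff.2 hn)
  rw [h.gcd_eq_one, isPeriodicPt_pow_iff, pow_one] at hper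
  exact hper

theorem pow_pow_eq_of_modEq {a b : ℕ} (h : a ≡ b [MOD m]) (hm : t ^ p ^ m = t) :
    t ^ p ^ a = t ^ p ^ b := by
  have hmod (c : ℕ) : t ^ p ^ (c % m) = t ^ p ^ c := by
    simpa only [pow_iterate] using (isPeriodicPt_pow_iff.2 hm).iterate_mod_apply c
  rw [← hmod a, ← hmod b, h]

end FrobeniusPeriod

theorem sq_add_sq_ne_zero_of_isCoprime {F : Type*} [Field F] (hF : ¬IsSquare (-1 : F)) {a b : F}
    (hab : IsCoprime a b) : a ^ 2 + b ^ 2 ≠ 0 := by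
  intro h
  have hb : b ≠ 0 := by
    rintro rfl
    have ha : a = 0 := by simpa using h
    exact hab.ne_zero_or_ne_zero.elim (· ha) (· rfl)
  exact hF ⟨a / b, by field_simp; linear_combination -h⟩

section CharThree

variable {K : Type*} [Field K] [CharP K 3] {m : ℕ}

theorem not_isSquare_neg_one_of_odd (hm : Odd m) (hK : ∀ t : K, t ^ 3 ^ m = t) :
    ¬IsSquare (-1 : K) := by
  rintro ⟨t, ht⟩
  have h9 : t ^ 3 ^ 2 = t := by grind
  have h3 : t ^ 3 = t := pow_eq_self_of_coprime hm.coprime_two_left h9 (hK t)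
  grind

theorem pow_three_ne_add_one (hm : Nat.Coprime 3 m) (hK : ∀ t : K, t ^ 3 ^ m = t) (t : K) :
    t ^ 3 ≠ t + 1 := by
  intro ht
  have h27 : t ^ 3 ^ 3 = t := by grind
  have h3 : t ^ 3 = t := pow_eq_self_of_coprime hm h27 (hK t)
  grind

theorem cayley_pow_eq_add {e : ℕ} (he : Even e) {x : K} (hx1 : x ≠ 1)
    (hx : (x + 1) ^ e = x ^ e + 1) :
    ((x + 1) / (x - 1)) ^ e = ((x + 1) / (x - 1) + 1) ^ e + ((x + 1) / (x - 1) - 1) ^ e := by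
  have hx0 : x - 1 ≠ 0 := sub_ne_zero.2 hx1
  have hadd : (x + 1) / (x - 1) + 1 = -x / (x - 1) := by grind
  have hsub : (x + 1) / (x - 1) - 1 = -1 / (x - 1) := by grind
  rw [hadd, hsub, div_pow, div_pow, div_pow, he.neg_pow, he.neg_one_pow, hx, add_div]

end CharThree

theorem mul_eq_zero_of_pow_thirteen_eq_add {R : Type*} [CommRing R] [CharP R 3] {y z : R}
    (h : z * y ^ 13 = (z + 1) * (y + 1) ^ 13 + (z - 1) * (y - 1) ^ 13) :
    ((y ^ 2) ^ 3 - y ^ 2 - 1) * ((y * z - 1) * (y ^ 2 + 1) ^ 3 - (y ^ 2 - 1) ^ 2) = 0 := by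
  grobner

section FrobeniusAction

variable {R S : Type*} [CommRing R] [CommRing S]

/-- The homogenisation of `1 + k (1 + k) ^ 2`, which is the product `y * σ y` as a function of
`k = 1 / (y ^ 2 + 1)`. -/
def cubicForm (a b : R) : R := b ^ 3 + a * (a + b) ^ 2

/-- The numerator, homogenised to degree 7 by `k = a / b`, of the rational map by which the
Frobenius power `σ` acts on `k = 1 / (y ^ 2 + 1)`. -/
def frobNum (a b : R) : R := (b - a) * b ^ 6

/-- The denominator belonging to `frobNum`. -/
def frobDen (a b : R) : R := frobNum a b + a * cubicForm a b ^ 2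

theorem map_cubicForm (f : R →+* S) (a b : R) :
    f (cubicForm a b) = cubicForm (f a) (f b) := by
  simp only [cubicForm, map_add, map_mul, map_pow]

theorem map_frobNum (f : R →+* S) (a b : R) : f (frobNum a b) = frobNum (f a) (f b) := by
  simp only [frobNum, map_sub, map_mul, map_pow]

theorem map_frobDen (f : R →+* S) (a b : R) : f (frobDen a b) = frobDen (f a) (f b) := by
  simp only [frobDen, map_frobNum, map_cubicForm, map_add, map_mul, map_pow]

theorem cubicForm_one_mul_pow {k a b : R} (h : k * b = a) :
    cubicForm k 1 * b ^ 3 = cubicForm a b := by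
  simp only [cubicForm, ← h]
  ring

theorem mul_frobDen_eq_frobNum {k k' a b : R} (h : k * b = a)
    (hk : k' * frobDen k 1 = frobNum k 1) : k' * frobDen a b = frobNum a b := by
  have hnum : frobNum a b = frobNum k 1 * b ^ 7 := by
    simp only [frobNum, ← h]
    ring
  have hden : frobDen a b = frobDen k 1 * b ^ 7 := by
    simp only [frobDen, frobNum, cubicForm, ← h]
    ring
  rw [hnum, hden, ← hk]
  ring

/-- The polynomial in `k` that vanishes when `σ (σ y) = y ^ 27`. -/
def twoStepEliminant (k : R) : R :=
  let a := frobNum k 1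
  let b := frobDen k 1
  (1 - k) ^ 13 * (cubicForm k 1 * b ^ 3) - k ^ 13 * cubicForm a b

/-- The polynomial in `k` that vanishes when `σ (σ (σ y)) = y ^ 3`. -/
def threeStepEliminant (k : R) : R :=
  let a := frobNum k 1
  let b := frobDen k 1
  b ^ 3 * (k ^ 2 * cubicForm k 1 * cubicForm (frobNum a b) (frobDen a b)) -
    (1 - k) ^ 2 * cubicForm a b * frobDen a b ^ 3

variable {σ : R →+* R} {y k : R}

theorem map_mul_frobDen (hk : k * (y ^ 2 + 1) = 1) (hy : y * σ y = cubicForm k 1) :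
    σ k * frobDen k 1 = frobNum k 1 := by
  have hσk : σ k * (σ y ^ 2 + 1) = 1 := by
    simpa only [map_mul, map_add, map_pow, map_one] using congrArg σ hk
  have hsq : (1 - k) * (1 - σ k) = k * σ k * cubicForm k 1 ^ 2 := by
    rw [← hy]
    linear_combination (-(1 - σ k)) * hk - k * y ^ 2 * hσk
  simp only [frobDen, frobNum]
  linear_combination -hsq

theorem map_mul_map_map (hy : y * σ y = cubicForm k 1) :
    σ y * σ (σ y) = cubicForm (σ k) 1 := by
  rw [← map_mul, hy, map_cubicForm, map_one]

theorem twoStepEliminant_eq_zero (hk : k * (y ^ 2 + 1) = 1) (hy : y * σ y = cubicForm k 1)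
    (hσ : σ (σ y) = y ^ 27) : twoStepEliminant k = 0 := by
  have hy₁ : σ y * y ^ 27 = cubicForm (σ k) 1 := hσ ▸ map_mul_map_map hy
  have hk₁ := map_mul_frobDen hk hy
  have hpow : (1 - k) ^ 13 = k ^ 13 * y ^ 26 := by
    rw [show 1 - k = k * y ^ 2 by linear_combination -hk]
    ring
  rw [twoStepEliminant, ← cubicForm_one_mul_pow hk₁, ← hy, ← hy₁, hpow]
  ring

theorem threeStepEliminant_eq_zero (hk : k * (y ^ 2 + 1) = 1) (hy : y * σ y = cubicForm k 1)
    (hσ : σ (σ (σ y)) = y ^ 3) : threeStepEliminant k = 0 := by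
  have hy₁ : σ y * σ (σ y) = cubicForm (σ k) 1 := map_mul_map_map hy
  have hy₂ : σ (σ y) * y ^ 3 = cubicForm (σ (σ k)) 1 := hσ ▸ map_mul_map_map hy₁
  have hk₁ := map_mul_frobDen hk hy
  have hk₂ : σ (σ k) * frobDen (σ k) 1 = frobNum (σ k) 1 := by
    simpa only [map_mul, map_frobDen, map_frobNum, map_one] using congrArg σ hk₁
  have hpow : (1 - k) ^ 2 = k ^ 2 * y ^ 4 := by
    rw [show 1 - k = k * y ^ 2 by linear_combination -hk]
    ring
  rw [threeStepEliminant, ← cubicForm_one_mul_pow hk₁,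
    ← cubicForm_one_mul_pow (mul_frobDen_eq_frobNum hk₁ hk₂), ← hy, ← hy₁, ← hy₂, hpow]
  ring

end FrobeniusAction

section Certificates

variable {R : Type*} [CommRing R] [CharP R 3]

theorem frobDen_pow_three (a b : R) : frobDen a b ^ 3 = frobDen (a ^ 3) (b ^ 3) := by
  simpa only [frobenius_def] using map_frobDen (frobenius R 3) a b

/- The remaining factors of both eliminants are products of irreducible polynomials of even degree
over `𝔽₃`. Each splits over `𝔽₉` into a conjugate pair, and collecting one factor from each pair
gives `a + i * b`, so that the product is a scalar multiple of `a ^ 2 + b ^ 2`. -/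

theorem exists_twoStepEliminant_eq (k : R) : ∃ a b : R, IsCoprime a b ∧
    twoStepEliminant k = -((k + 1) * (k ^ 3 + k ^ 2 - 1) ^ 4 * (a ^ 2 + b ^ 2)) := by
  refine ⟨
    Nat.ofDigits k [1, 0, 0, 2, 1, 2, 0, 2, 1, 1, 2, 1, 1],
    Nat.ofDigits k [1, 2, 1, 1, 0, 1, 0, 0, 0, 0, 2, 2],
    ⟨
    Nat.ofDigits k [1, 1, 0, 1, 0, 0, 1, 2, 0, 1],
    Nat.ofDigits k [0, 2, 2, 0, 2, 0, 0, 0, 1, 0, 1], ?_⟩, ?_⟩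
  · simp only [Nat.ofDigits]
    grobner
  · simp only [Nat.ofDigits, twoStepEliminant, frobDen, frobNum, cubicForm]
    grobner

theorem exists_threeStepEliminant_eq (k : R) : ∃ a b : R, IsCoprime a b ∧
    threeStepEliminant k = -((k + 1) * (a ^ 2 + b ^ 2)) := by
  refine ⟨
    Nat.ofDigits k [1, 2, 0, 1, 1, 0, 2, 2, 1, 2, 2, 0, 0, 1, 0, 2, 0, 2, 0, 0, 1, 2, 0, 1, 2, 2,
      1, 2, 0, 0, 0, 2, 0, 0, 1, 0, 2, 1, 1, 2, 0, 0, 1, 1, 2, 0, 0, 0, 1, 2, 0, 0, 0, 2, 2, 1, 1,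
      1, 0, 1, 2, 0, 0, 0, 2, 0, 1, 1, 0, 0, 2, 0, 2, 0, 0, 2, 0, 0, 0, 2, 0, 1, 0, 0, 1, 2, 1],
    Nat.ofDigits k [2, 0, 1, 2, 2, 0, 1, 1, 0, 1, 0, 2, 2, 2, 1, 2, 2, 1, 1, 2, 0, 1, 2, 1, 1, 1,
      2, 1, 2, 0, 0, 1, 0, 2, 2, 0, 2, 1, 2, 0, 1, 0, 0, 0, 1, 2, 2, 1, 2, 1, 1, 0, 1, 2, 2, 1, 2,
      0, 1, 1, 0, 1, 0, 2, 2, 2, 2, 2, 1, 1, 0, 1, 0, 2, 0, 1, 1, 2, 2, 2, 2],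
    ⟨
    Nat.ofDigits k [1, 1, 0, 2, 0, 1, 2, 0, 0, 0, 2, 2, 0, 1, 2, 0, 0, 0, 0, 0, 1, 2, 1, 2, 0, 1,
      0, 2, 1, 1, 2, 0, 2, 0, 1, 1, 2, 2, 0, 0, 0, 0, 1, 2, 0, 0, 0, 1, 1, 1, 0, 1, 0, 0, 0, 0, 2,
      1, 0, 0, 2, 2, 1, 1, 2, 0, 0, 0, 2, 2, 1, 1, 0, 0, 1, 1, 1, 0, 2],
    Nat.ofDigits k [0, 0, 2, 0, 2, 0, 2, 2, 0, 0, 1, 2, 2, 0, 0, 2, 2, 0, 0, 2, 1, 1, 2, 0, 0, 2,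
      2, 0, 1, 0, 2, 2, 1, 1, 1, 0, 2, 2, 2, 1, 2, 2, 0, 0, 2, 1, 0, 0, 1, 1, 2, 1, 0, 0, 0, 2, 2,
      1, 2, 2, 0, 1, 2, 1, 2, 2, 1, 0, 0, 2, 2, 2, 2, 0, 0, 1, 0, 1, 1, 2, 2, 0, 2, 2, 2], ?_⟩, ?_⟩
  · simp only [Nat.ofDigits]
    grobner
  · -- `frobDen_pow_three` keeps the cubes sparse; expanding them naively is much slower.
    simp only [Nat.ofDigits, threeStepEliminant, cubicForm, frobDen_pow_three]
    simp only [frobDen, frobNum, cubicForm]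
    grobner

end Certificates

section Elimination

variable {K : Type*} [Field K] [CharP K 3] {k : K}

theorem mul_eq_cubicForm {y z : K} (hAS : ∀ t : K, t ^ 3 ≠ t + 1) (hk : k * (y ^ 2 + 1) = 1)
    (h : z * y ^ 13 = (z + 1) * (y + 1) ^ 13 + (z - 1) * (y - 1) ^ 13) :
    y * z = cubicForm k 1 := by
  have hne : (y ^ 2) ^ 3 - y ^ 2 - 1 ≠ 0 := by
    simpa only [sub_sub] using sub_ne_zero.2 (hAS (y ^ 2))
  have hz := (mul_eq_zero.1 (mul_eq_zero_of_pow_thirteen_eq_add h)).resolve_left hne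
  have hkz : y * z - 1 = k ^ 3 * (y ^ 2 - 1) ^ 2 := by
    linear_combination k ^ 3 * hz - (y * z - 1) * ((k * (y ^ 2 + 1)) ^ 2 + k * (y ^ 2 + 1) + 1) * hk
  rw [cubicForm]
  grind

theorem eq_neg_one_of_twoStepEliminant_eq_zero (hneg : ¬IsSquare (-1 : K))
    (hAS : ∀ t : K, t ^ 3 ≠ t + 1) (hk : k ≠ 0) (h : twoStepEliminant k = 0) : k = -1 := by
  obtain ⟨a, b, hab, hfac⟩ := exists_twoStepEliminant_eq k
  have hcubic : k ^ 3 + k ^ 2 - 1 ≠ 0 := by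
    intro h0
    refine hAS k⁻¹ ?_
    field_simp
    linear_combination -h0
  have hsq := sq_add_sq_ne_zero_of_isCoprime hneg hab
  rw [h, eq_comm, neg_eq_zero, mul_eq_zero, mul_eq_zero] at hfac
  exact eq_neg_of_add_eq_zero_left ((hfac.resolve_right hsq).resolve_right (pow_ne_zero 4 hcubic))

theorem eq_neg_one_of_threeStepEliminant_eq_zero (hneg : ¬IsSquare (-1 : K))
    (h : threeStepEliminant k = 0) : k = -1 := by
  obtain ⟨a, b, hab, hfac⟩ := exists_threeStepEliminant_eq k
  have hsq := sq_add_sq_ne_zero_of_isCoprime hneg hab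
  rw [h, eq_comm, neg_eq_zero, mul_eq_zero] at hfac
  exact eq_neg_of_add_eq_zero_left (hfac.resolve_right hsq)

end Elimination

section Solutions

variable {K : Type*} [Field K] [CharP K 3] {m h : ℕ}

theorem sq_eq_one_of_pow_eq_add (hm : Odd m) (hm3 : Nat.Coprime 3 m)
    (hK : ∀ t : K, t ^ 3 ^ m = t) (hh : 2 * h ≡ 3 [MOD m] ∨ 3 * h ≡ 1 [MOD m]) {y : K}
    (hy : y ^ (3 ^ h + 13) = (y + 1) ^ (3 ^ h + 13) + (y - 1) ^ (3 ^ h + 13)) : y ^ 2 = 1 := by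
  have hneg := not_isSquare_neg_one_of_odd hm hK
  have hAS := pow_three_ne_add_one hm3 hK
  let σ := iterateFrobenius K 3 h
  have hσ (t : K) : t ^ 3 ^ h = σ t := (iterateFrobenius_def 3 h t).symm
  have hn : y ^ 2 + 1 ≠ 0 := fun h0 ↦ hneg ⟨y, by linear_combination -h0⟩
  have hk : (y ^ 2 + 1)⁻¹ * (y ^ 2 + 1) = 1 := inv_mul_cancel₀ hn
  have hyσ : y * σ y = cubicForm (y ^ 2 + 1)⁻¹ 1 := by
    refine mul_eq_cubicForm hAS hk ?_
    simpa only [pow_add _ (3 ^ h), hσ, map_add, map_sub, map_one] using hy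
  have hk1 : (y ^ 2 + 1)⁻¹ = -1 := by
    rcases hh with h2 | h3
    · refine eq_neg_one_of_twoStepEliminant_eq_zero hneg hAS (inv_ne_zero hn)
        (twoStepEliminant_eq_zero hk hyσ ?_)
      rw [← hσ, ← hσ, ← pow_mul, ← pow_add, ← two_mul, pow_pow_eq_of_modEq h2 (hK y)]
      norm_num
    · refine eq_neg_one_of_threeStepEliminant_eq_zero hneg (threeStepEliminant_eq_zero hk hyσ ?_)
      rw [← hσ, ← hσ, ← hσ, ← pow_mul, ← pow_mul, ← pow_add, ← pow_add,
        show h + (h + h) = 3 * h by ring, pow_pow_eq_of_modEq h3 (hK y), pow_one]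
  rw [hk1] at hk
  linear_combination -hk - CharP.cast_eq_zero K 3

theorem stmt2_general (hm : Odd m) (hm3 : Nat.Coprime 3 m) (hK : ∀ t : K, t ^ 3 ^ m = t)
    (hh : 2 * h ≡ 3 [MOD m] ∨ 3 * h ≡ 1 [MOD m]) (x : K) :
    (x + 1) ^ (3 ^ h + 13) - x ^ (3 ^ h + 13) - 1 = 0 ↔ x = 0 := by
  refine ⟨fun hx ↦ ?_, fun hx ↦ by simp [hx]⟩
  have heven : Even (3 ^ h + 13) := (Odd.pow (by decide)).add_odd (by decide)
  have hpow : (x + 1) ^ (3 ^ h + 13) = x ^ (3 ^ h + 13) + 1 := by linear_combination hx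
  have h3 : (3 : K) = 0 := CharP.cast_eq_zero K 3
  have hx1 : x ≠ 1 := by
    rintro rfl
    have h2 : (1 : K) + 1 = -1 := by linear_combination h3
    rw [h2, heven.neg_one_pow, one_pow] at hpow
    simp at hpow
  have hy := sq_eq_one_of_pow_eq_add hm hm3 hK hh (cayley_pow_eq_add heven hx1 hpow)
  rw [div_pow, div_eq_one_iff_eq (pow_ne_zero 2 (sub_ne_zero.2 hx1))] at hy
  linear_combination hy - x * h3

end Solutions

theorem stmt2 (m h : ℕ) (hm : Nat.Prime m) (hodd : Odd m)
    (hh1 : 3 ≤ h) (hh2 : h ≤ m - 1)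
    (hcond : (5 ≤ m ∧ 2 * h ≡ 3 [MOD m]) ∨ (m % 3 = 2 ∧ h = (m + 1) / 3)) :
    ∀ x : GaloisField 3 m, (x + 1) ^ (3 ^ h + 13) - x ^ (3 ^ h + 13) - 1 = 0 ↔ x = 0 := by
  have hm3 : Nat.Coprime 3 m := (Nat.coprime_primes Nat.prime_three hm).2 (by omega)
  have hK (t : GaloisField 3 m) : t ^ 3 ^ m = t := by
    have := Fintype.ofFinite (GaloisField 3 m)
    rw [← GaloisField.card 3 m hm.ne_zero, Nat.card_eq_fintype_card, FiniteField.pow_card]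
  refine stmt2_general hodd hm3 hK (hcond.imp And.right ?_)
  rintro ⟨hmod, rfl⟩
  rw [show 3 * ((m + 1) / 3) = m + 1 by omega]
  exact Nat.add_modEq_left
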